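/- Let Q be a finite group and ω₀ a normalized U(1)-valued 3-cocycle on Q. Then there exist a finite group G, a surjective group homomorphism ρ : G → Q, a normalized U(1)-valued 3-cocycle ω on Q cohomologous to ω₀, and a normalized 2-cochain c : G × G → U(1), such that dc(g₁,g₂,g₃) = ω(ρ(g₁),ρ(g₂),ρ(g₃)) for all g₁,g₂,g₃ ∈ G, and c(k₁,k₂) = 1 for all k₁,k₂ in the kernel of ρ. -/

import Mathlib

/-- Auxiliary structure packaging the data produced by the cohomology lemma (Lemma 4.3):
a finite group `G`, a surjection `ρ : G → Q`, a normalized 3-cocycle `ω` on `Q` cohomologous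
to the given `ω₀` (witnessed by the normalized 2-cochain `b`), and a normalized 2-cochain
`c` on `G` with `dc = ρ*(ω)` which is identically `1` on the kernel of `ρ`. -/
structure CohomologyLemmaWitness (Q : Type) [Group Q]
    (ω₀ : Q → Q → Q → Circle) : Type 1 where
  G : Type
  [grp : Group G]
  [fin : Finite G]
  ρ : G →* Q
  surj : Function.Surjective ρ
  ω : Q → Q → Q → Circle
  ω_norm : ∀ g h k, g = 1 ∨ h = 1 ∨ k = 1 → ω g h k = 1
  ω_coc : ∀ g₁ g₂ g₃ g₄,
    ω (g₁ * g₂) g₃ g₄ * ω g₁ g₂ (g₃ * g₄)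
      = ω g₂ g₃ g₄ * ω g₁ (g₂ * g₃) g₄ * ω g₁ g₂ g₃
  b : Q → Q → Circle
  b_norm : ∀ g h, g = 1 ∨ h = 1 → b g h = 1
  cohomologous : ∀ g h l,
    ω g h l * (ω₀ g h l)⁻¹ = (b h l)⁻¹ * b (g * h) l * (b g (h * l))⁻¹ * b g h
  c : G → G → Circle
  c_norm : ∀ g h, g = 1 ∨ h = 1 → c g h = 1
  c_coboundary : ∀ g₁ g₂ g₃,
    (c g₂ g₃)⁻¹ * c (g₁ * g₂) g₃ * (c g₁ (g₂ * g₃))⁻¹ * c g₁ g₂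
      = ω (ρ g₁) (ρ g₂) (ρ g₃)
  c_ker : ∀ k₁ k₂, k₁ ∈ ρ.ker → k₂ ∈ ρ.ker → c k₁ k₂ = 1

/-!
Let `μ` be a finite coefficient group and let `Q` act on the group `F` of maps `f : Q → μ` with
`f 1 = 1` by translation, `(g • f) x = f (x * g) / f g`. A normalized 3-cocycle `ω` with values
in `μ` is the same thing as a normalized 2-cocycle `(g, h) ↦ ω · g h` with values in `F`, and so
defines an extension `G` of `Q` by `F`. In `G` the fibre coordinate of a product is
`f₁ * g₁ • f₂ * ω · g₁ g₂`; evaluating it shows that `c (f₁, g₁) (f₂, g₂) = (f₂ g₁)⁻¹` trivializes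
the pullback of `ω`, and `c` is `1` as soon as `g₁ = 1`.

To reach finite coefficients, take the product of the cocycle equation over its first variable:
`ω₀ ^ |Q|` is the inverse of the coboundary of `(g, h) ↦ ∏ x, ω₀ x g h`. Correcting `ω₀` by a
`|Q|`-th root of this 2-cochain makes all of its values `|Q|`-torsion, so that they generate a
finite group.
-/

universe u v

section Cochains

variable {Q A : Type*} [Group Q] [CommGroup A]

/-- Normalized 2-cochains on `Q` with values in `A`. -/
def IsNormalized₂ (b : Q → Q → A) : Prop :=
  ∀ g h, g = 1 ∨ h = 1 → b g h = 1

/-- Normalized 3-cocycles on `Q` with values in `A`, on which `Q` acts trivially. -/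
structure IsNormalizedCocycle₃ (ω : Q → Q → Q → A) : Prop where
  normalized : ∀ g h k, g = 1 ∨ h = 1 ∨ k = 1 → ω g h k = 1
  cocycle : ∀ g₁ g₂ g₃ g₄,
    ω (g₁ * g₂) g₃ g₄ * ω g₁ g₂ (g₃ * g₄) =
      ω g₂ g₃ g₄ * ω g₁ (g₂ * g₃) g₄ * ω g₁ g₂ g₃

/-- The coboundary of a 2-cochain. It takes values in the inverse of the usual bar differential,
which is the sign convention of the paper. -/
def coboundary₂ (b : Q → Q → A) (g h l : Q) : A :=
  (b h l)⁻¹ * b (g * h) l * (b g (h * l))⁻¹ * b g h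

theorem coboundary₂_pow (b : Q → Q → A) (n : ℕ) (g h l : Q) :
    coboundary₂ b g h l ^ n = coboundary₂ (fun x y ↦ b x y ^ n) g h l := by
  simp only [coboundary₂, mul_pow, inv_pow]

theorem isNormalizedCocycle₃_coboundary₂ {b : Q → Q → A} (hb : IsNormalized₂ b) :
    IsNormalizedCocycle₃ (coboundary₂ b) where
  normalized := by
    rintro g h k (rfl | rfl | rfl) <;>
      simp [coboundary₂, hb _ _ (Or.inl rfl), hb _ _ (Or.inr rfl)]
  cocycle g₁ g₂ g₃ g₄ := by
    simp only [coboundary₂, mul_assoc g₁ g₂, mul_assoc g₂ g₃]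
    apply Additive.ofMul.injective
    simp only [ofMul_mul, ofMul_inv]
    abel

namespace IsNormalizedCocycle₃

theorem mul {ω η : Q → Q → Q → A} (hω : IsNormalizedCocycle₃ ω) (hη : IsNormalizedCocycle₃ η) :
    IsNormalizedCocycle₃ (ω * η) where
  normalized g h k hghk := by
    simp only [Pi.mul_apply, hω.normalized g h k hghk, hη.normalized g h k hghk, mul_one]
  cocycle g₁ g₂ g₃ g₄ := by
    simp only [Pi.mul_apply]
    rw [mul_mul_mul_comm, hω.cocycle, hη.cocycle, mul_mul_mul_comm, mul_mul_mul_comm (ω g₂ g₃ g₄)]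

theorem of_comp_injective {B : Type*} [CommGroup B] {φ : B →* A} (hφ : Function.Injective φ)
    {ω : Q → Q → Q → B} (hω : IsNormalizedCocycle₃ fun g h k ↦ φ (ω g h k)) :
    IsNormalizedCocycle₃ ω where
  normalized g h k hghk := hφ <| by rw [hω.normalized g h k hghk, map_one]
  cocycle g₁ g₂ g₃ g₄ := hφ <| by simpa only [map_mul] using hω.cocycle g₁ g₂ g₃ g₄

theorem pow_card_mul_coboundary₂_prod [Fintype Q] {ω : Q → Q → Q → A}
    (hω : IsNormalizedCocycle₃ ω) (g h k : Q) :
    ω g h k ^ Fintype.card Q * coboundary₂ (fun y z ↦ ∏ x, ω x y z) g h k = 1 := by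
  have hprod : (∏ x, ω x h k) * ∏ x, ω x g (h * k) =
      ω g h k ^ Fintype.card Q * (∏ x, ω x (g * h) k) * ∏ x, ω x g h :=
    calc (∏ x, ω x h k) * ∏ x, ω x g (h * k)
        = ∏ x, ω (x * g) h k * ω x g (h * k) := by
          rw [Finset.prod_mul_distrib, ← Equiv.prod_comp (Equiv.mulRight g)]
          rfl
      _ = ∏ x, ω g h k * ω x (g * h) k * ω x g h :=
          Finset.prod_congr rfl fun x _ ↦ hω.cocycle x g h k
      _ = _ := by simp only [Finset.prod_mul_distrib, Finset.prod_const, Finset.card_univ]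
  calc ω g h k ^ Fintype.card Q * coboundary₂ (fun y z ↦ ∏ x, ω x y z) g h k
      = (ω g h k ^ Fintype.card Q * (∏ x, ω x (g * h) k) * ∏ x, ω x g h) /
          ((∏ x, ω x h k) * ∏ x, ω x g (h * k)) := by
        simp only [coboundary₂, div_eq_mul_inv, mul_inv]
        ac_rfl
    _ = 1 := by rw [hprod, div_self']

theorem exists_mul_coboundary₂_pow_card_eq_one [Finite Q]
    (hA : Function.Surjective fun a : A ↦ a ^ Nat.card Q)
    {ω : Q → Q → Q → A} (hω : IsNormalizedCocycle₃ ω) :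
    ∃ b : Q → Q → A, IsNormalized₂ b ∧
      ∀ g h k, (ω * coboundary₂ b) g h k ^ Nat.card Q = 1 := by
  have := Fintype.ofFinite Q
  obtain ⟨root, hroot, hroot_one⟩ : ∃ r : A → A, (∀ a, r a ^ Nat.card Q = a) ∧ r 1 = 1 := by
    choose r hr using hA
    exact ⟨fun a ↦ r a / r 1, fun a ↦ by simp only [div_pow, hr, div_one], div_self' _⟩
  refine ⟨fun g h ↦ root (∏ x, ω x g h), fun g h hgh ↦ ?_, fun g h k ↦ ?_⟩
  · simp only [hω.normalized _ g h (Or.inr hgh), Finset.prod_const_one, hroot_one]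
  · simp only [Pi.mul_apply, mul_pow, coboundary₂_pow, hroot]
    rw [Nat.card_eq_fintype_card, hω.pow_card_mul_coboundary₂_prod]

end IsNormalizedCocycle₃

end Cochains

/-- A multiplicative 2-cocycle normalized at `(1, 1)`, bundled so that the extension it classifies
is a group by instance resolution. -/
structure NormalizedMulCocycle₂ (G M : Type*) [Group G] [CommGroup M] [MulDistribMulAction G M]
    where
  toFun : G × G → M
  isMulCocycle₂ : groupCohomology.IsMulCocycle₂ toFun
  map_one_one : toFun (1, 1) = 1

namespace NormalizedMulCocycle₂

variable {G M : Type*} [Group G] [CommGroup M] [MulDistribMulAction G M]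

/-- The extension of `G` by `M` classified by `α`, with underlying set `M × G`. -/
@[ext]
structure Extension (α : NormalizedMulCocycle₂ G M) where
  fiber : M
  base : G

namespace Extension

variable {α : NormalizedMulCocycle₂ G M}

instance : Mul α.Extension :=
  ⟨fun a b ↦ ⟨a.fiber * a.base • b.fiber * α.toFun (a.base, b.base), a.base * b.base⟩⟩

instance : One α.Extension := ⟨⟨1, 1⟩⟩

instance : Inv α.Extension :=
  ⟨fun a ↦ ⟨(a.base⁻¹ • a.fiber * α.toFun (a.base⁻¹, a.base))⁻¹, a.base⁻¹⟩⟩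

@[simp] theorem fiber_mul (a b : α.Extension) :
    (a * b).fiber = a.fiber * a.base • b.fiber * α.toFun (a.base, b.base) := rfl

@[simp] theorem base_mul (a b : α.Extension) : (a * b).base = a.base * b.base := rfl

@[simp] theorem fiber_one : (1 : α.Extension).fiber = 1 := rfl

@[simp] theorem base_one : (1 : α.Extension).base = 1 := rfl

@[simp] theorem fiber_inv (a : α.Extension) :
    a⁻¹.fiber = (a.base⁻¹ • a.fiber * α.toFun (a.base⁻¹, a.base))⁻¹ := rfl

@[simp] theorem base_inv (a : α.Extension) : a⁻¹.base = a.base⁻¹ := rfl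

protected theorem mul_assoc (a b c : α.Extension) : a * b * c = a * (b * c) := by
  ext
  · calc (a * b * c).fiber
        = a.fiber * a.base • b.fiber * (a.base * b.base) • c.fiber *
            (α.toFun (a.base * b.base, c.base) * α.toFun (a.base, b.base)) := by
          simp only [fiber_mul, base_mul]
          ac_rfl
      _ = a.fiber * a.base • b.fiber * (a.base * b.base) • c.fiber *
            (a.base • α.toFun (b.base, c.base) * α.toFun (a.base, b.base * c.base)) := by
          rw [α.isMulCocycle₂]
      _ = (a * (b * c)).fiber := by
          simp only [fiber_mul, base_mul, smul_mul', mul_smul]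
          ac_rfl
  · exact mul_assoc _ _ _

protected theorem one_mul (a : α.Extension) : 1 * a = a := by
  ext
  · simp [groupCohomology.map_one_fst_of_isMulCocycle₂ α.isMulCocycle₂, α.map_one_one]
  · simp

protected theorem inv_mul_cancel (a : α.Extension) : a⁻¹ * a = 1 := by
  ext
  · simp [mul_assoc]
  · simp

instance : Group α.Extension :=
  Group.ofLeftAxioms Extension.mul_assoc Extension.one_mul Extension.inv_mul_cancel

instance [Finite G] [Finite M] : Finite α.Extension :=
  Finite.of_injective (fun a ↦ (a.fiber, a.base)) fun _ _ h ↦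
    Extension.ext (congrArg Prod.fst h) (congrArg Prod.snd h)

variable (α) in
/-- The projection of the extension onto its base. -/
def proj : α.Extension →* G where
  toFun := base
  map_one' := base_one
  map_mul' := base_mul

theorem proj_surjective : Function.Surjective (proj α) := fun g ↦ ⟨⟨1, g⟩, rfl⟩

end Extension

end NormalizedMulCocycle₂

section DimensionShift

variable {Q A : Type*} [Group Q] [CommGroup A]

variable (Q A) in
/-- The group of maps `Q → A` sending `1` to `1`. It represents the coinduced module of all maps
`Q → A` modulo the constants, and is used to lower the degree of a cocycle by one. -/
def basedMaps : Subgroup (Q → A) := (Pi.evalMonoidHom (fun _ : Q ↦ A) 1).ker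

theorem basedMaps.apply_one (f : basedMaps Q A) : f.1 1 = 1 := f.2

/-- Right translation, renormalized so as to preserve the value at `1`. -/
instance : MulDistribMulAction Q (basedMaps Q A) where
  smul g f := ⟨fun x ↦ f.1 (x * g) / f.1 g, by simp [basedMaps, MonoidHom.mem_ker]⟩
  one_smul f := Subtype.ext <| funext fun x ↦ by
    change f.1 (x * 1) / f.1 1 = f.1 x
    rw [mul_one, basedMaps.apply_one, div_one]
  mul_smul g h f := Subtype.ext <| funext fun x ↦ by
    change f.1 (x * (g * h)) / f.1 (g * h) = f.1 (x * g * h) / f.1 h / (f.1 (g * h) / f.1 h)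
    rw [div_div_div_cancel_right, mul_assoc]
  smul_mul g f₁ f₂ := Subtype.ext <| funext fun x ↦ mul_div_mul_comm _ _ _ _
  smul_one g := Subtype.ext <| funext fun x ↦ div_self' _

theorem basedMaps.smul_apply (g : Q) (f : basedMaps Q A) (x : Q) :
    (g • f).1 x = f.1 (x * g) / f.1 g := rfl

namespace IsNormalizedCocycle₃

variable {ω : Q → Q → Q → A} (hω : IsNormalizedCocycle₃ ω)

/-- Dimension shifting: a normalized 3-cocycle, regarded as a function of its first variable,
is a normalized 2-cocycle with values in the based maps. -/
def dimensionShift : NormalizedMulCocycle₂ Q (basedMaps Q A) where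
  toFun p := ⟨fun x ↦ ω x p.1 p.2, hω.normalized _ _ _ (Or.inl rfl)⟩
  isMulCocycle₂ g h j := Subtype.ext <| funext fun x ↦ by
    change ω x (g * h) j * ω x g h = ω (x * g) h j / ω g h j * ω x g (h * j)
    rw [div_mul_eq_mul_div, hω.cocycle, mul_assoc, mul_div_cancel_left]
  map_one_one := Subtype.ext <| funext fun x ↦ hω.normalized _ _ _ (Or.inr (Or.inl rfl))

theorem dimensionShift_apply (g h x : Q) : (hω.dimensionShift.toFun (g, h)).1 x = ω x g h := rfl

/-- The 2-cochain on the extension classified by the dimension shift of `ω` whose coboundary is the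
pullback of `ω`. -/
def trivialization (a b : hω.dimensionShift.Extension) : A := (b.fiber.1 a.base)⁻¹

theorem isNormalized₂_trivialization : IsNormalized₂ hω.trivialization := by
  rintro a b (rfl | rfl)
  · exact inv_eq_one.mpr (basedMaps.apply_one b.fiber)
  · exact inv_one

theorem coboundary₂_trivialization (a b c : hω.dimensionShift.Extension) :
    coboundary₂ hω.trivialization a b c = ω a.base b.base c.base := by
  simp only [coboundary₂, trivialization, NormalizedMulCocycle₂.Extension.fiber_mul,
    NormalizedMulCocycle₂.Extension.base_mul, Subgroup.coe_mul, Pi.mul_apply,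
    basedMaps.smul_apply, dimensionShift_apply]
  apply Additive.ofMul.injective
  simp only [ofMul_mul, ofMul_inv, ofMul_div]
  abel

theorem trivialization_eq_one_of_mem_ker {a : hω.dimensionShift.Extension}
    (ha : a ∈ (NormalizedMulCocycle₂.Extension.proj hω.dimensionShift).ker)
    (b : hω.dimensionShift.Extension) : hω.trivialization a b = 1 := by
  have hbase : a.base = 1 := ha
  rw [trivialization, hbase, basedMaps.apply_one, inv_one]

end IsNormalizedCocycle₃

end DimensionShift

theorem finite_closure_of_isOfFinOrder {A : Type*} [CommGroup A] {s : Set A} (hs : s.Finite)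
    (hs_ord : ∀ a ∈ s, IsOfFinOrder a) : Finite (Subgroup.closure s) := by
  have := hs.to_subtype
  have hle : Subgroup.closure s ≤ CommGroup.torsion A := (Subgroup.closure_le _).mpr hs_ord
  exact CommGroup.finite_of_fg_isMulTorsion _ fun a ↦ Submonoid.isOfFinOrder_coe.mp (hle a.2)

theorem exists_finite_extension_trivializing {Q : Type u} {A : Type v} [Group Q] [Finite Q]
    [CommGroup A] {ω : Q → Q → Q → A} (hω : IsNormalizedCocycle₃ ω)
    (hω_ord : ∀ g h k, IsOfFinOrder (ω g h k)) :
    ∃ (G : Type (max u v)) (_ : Group G) (_ : Finite G) (ρ : G →* Q) (c : G → G → A),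
      Function.Surjective ρ ∧ IsNormalized₂ c ∧
      (∀ g₁ g₂ g₃, coboundary₂ c g₁ g₂ g₃ = ω (ρ g₁) (ρ g₂) (ρ g₃)) ∧
      ∀ k ∈ ρ.ker, ∀ g, c k g = 1 := by
  let values : Set A := Set.range fun p : Q × Q × Q ↦ ω p.1 p.2.1 p.2.2
  let B := Subgroup.closure values
  have : Finite B := finite_closure_of_isOfFinOrder (Set.finite_range _) <| by
    rintro _ ⟨p, rfl⟩
    exact hω_ord _ _ _
  let ω' : Q → Q → Q → B := fun g h k ↦ ⟨ω g h k, Subgroup.subset_closure ⟨(g, h, k), rfl⟩⟩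
  have hω' : IsNormalizedCocycle₃ ω' :=
    IsNormalizedCocycle₃.of_comp_injective B.subtype_injective hω
  refine ⟨hω'.dimensionShift.Extension, inferInstance, inferInstance,
    NormalizedMulCocycle₂.Extension.proj _, fun a b ↦ (hω'.trivialization a b : A),
    NormalizedMulCocycle₂.Extension.proj_surjective, fun a b hab ↦ ?_, fun a b c ↦ ?_,
    fun a ha b ↦ ?_⟩
  · exact congrArg Subtype.val (hω'.isNormalized₂_trivialization a b hab)
  · exact congrArg Subtype.val (hω'.coboundary₂_trivialization a b c)
  · exact congrArg Subtype.val (hω'.trivialization_eq_one_of_mem_ker ha b)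

theorem cohomology_lemma_general {Q : Type u} {A : Type v} [Group Q] [Finite Q] [CommGroup A]
    (hA : Function.Surjective fun a : A ↦ a ^ Nat.card Q)
    {ω₀ : Q → Q → Q → A} (hω₀ : IsNormalizedCocycle₃ ω₀) :
    ∃ (G : Type (max u v)) (_ : Group G) (_ : Finite G) (ρ : G →* Q) (ω : Q → Q → Q → A)
      (b : Q → Q → A) (c : G → G → A),
      Function.Surjective ρ ∧ IsNormalizedCocycle₃ ω ∧ IsNormalized₂ b ∧
      (∀ g h l, ω g h l * (ω₀ g h l)⁻¹ = coboundary₂ b g h l) ∧ IsNormalized₂ c ∧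
      (∀ g₁ g₂ g₃, coboundary₂ c g₁ g₂ g₃ = ω (ρ g₁) (ρ g₂) (ρ g₃)) ∧
      ∀ k ∈ ρ.ker, ∀ g, c k g = 1 := by
  obtain ⟨b, hb, hpow⟩ := hω₀.exists_mul_coboundary₂_pow_card_eq_one hA
  have hω := hω₀.mul (isNormalizedCocycle₃_coboundary₂ hb)
  obtain ⟨G, _, _, ρ, c, hρ, hc, hdc, hker⟩ := exists_finite_extension_trivializing hω
    fun g h k ↦ isOfFinOrder_iff_pow_eq_one.mpr ⟨_, Nat.card_pos, hpow g h k⟩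
  exact ⟨G, _, ‹_›, ρ, ω₀ * coboundary₂ b, b, c, hρ, hω, hb,
    fun g h l ↦ mul_inv_cancel_comm _ _, hc, hdc, hker⟩

theorem circle_pow_surjective {n : ℕ} (hn : n ≠ 0) :
    Function.Surjective fun z : Circle ↦ z ^ n := by
  intro z
  obtain ⟨t, rfl⟩ := Circle.exp_surjective z
  refine ⟨Circle.exp (t / n), ?_⟩
  simp only [← Circle.exp_nsmul, nsmul_eq_mul, mul_div_cancel₀ t (Nat.cast_ne_zero.mpr hn)]

/-- Lemma 4.3 of the paper.  For every finite group `Q` and normalized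
`U(1)`-valued 3-cocycle `ω₀` on `Q` there are a finite group `G`, a surjection `ρ : G → Q`, a
normalized 3-cocycle `ω` cohomologous to `ω₀` and a normalized 2-cochain `c` on `G` with
`dc = ρ*(ω)` and `c ≡ 1` on `ker ρ`. -/
theorem cohomology_lemma (Q : Type) [Group Q] [Finite Q]
    (ω₀ : Q → Q → Q → Circle)
    (hω₀_norm : ∀ g h k, g = 1 ∨ h = 1 ∨ k = 1 → ω₀ g h k = 1)
    (hω₀_coc : ∀ g₁ g₂ g₃ g₄,
      ω₀ (g₁ * g₂) g₃ g₄ * ω₀ g₁ g₂ (g₃ * g₄)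
        = ω₀ g₂ g₃ g₄ * ω₀ g₁ (g₂ * g₃) g₄ * ω₀ g₁ g₂ g₃) :
    Nonempty (CohomologyLemmaWitness Q ω₀) := by
  obtain ⟨G, _, _, ρ, ω, b, c, hρ, hω, hb, hωω₀, hc, hdc, hker⟩ := cohomology_lemma_general
    (circle_pow_surjective Nat.card_pos.ne') ⟨hω₀_norm, hω₀_coc⟩
  exact ⟨⟨G, ρ, hρ, ω, hω.normalized, hω.cocycle, b, hb, hωω₀, c, hc, hdc,
    fun k₁ k₂ hk₁ _ ↦ hker k₁ hk₁ k₂⟩⟩
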